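/- arXiv:1812.00830 — 4 statements merged into one kernel-verified Lean document; each statement's English description precedes it below -/
import Mathlib

section
/- Let (R,𝔪) be a noetherian local ring which is quasi-reduced, i.e., every associated prime of R is a minimal prime (Serre's condition S₁) and for every minimal prime 𝔭 the localization R_𝔭 is injective as a module over itself (R is generically Gorenstein). Then every finitely generated reflexive R-module is free if and only if R is a regular local ring of Krull dimension at most two. -/
/-!
If `R` is regular local of dimension at most two and `x ∈ 𝔪 \ 𝔪²`, then `R ⧸ x` is a discrete
valuation ring or a field; for `M` reflexive, `M ⧸ xM` is torsion-free, hence free, over it, and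
freeness lifts to `M`.

Conversely, over a quasi-reduced ring kernels of maps from a finite free module to `R` are
reflexive, hence free by assumption. Annihilators of ideals are reflexive as well, so unless `R` is
a field `𝔪` has zero annihilator and contains a regular element `x ∉ 𝔪²`. A presentation of `𝔪`
with free kernel reduces modulo `x`, so `𝔪 ⧸ x𝔪` has projective dimension at most one over
`A = R ⧸ x`. The residue field is a direct summand of it, spanned by the class of `x`, whence `𝔪_A`
is free, `A` is regular of dimension at most one, and `R` is regular of dimension at most two.
-/

section

open IsLocalRing
open scoped Pointwise

universe u v

section CommRing

variable {R : Type*} [CommRing R]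

lemma exists_mem_notMem_of_finite_primes {I J : Ideal R} (hJ : ¬ I ≤ J) {s : Set (Ideal R)}
    (hs : s.Finite) (hprime : ∀ p ∈ s, p.IsPrime) (hle : ∀ p ∈ s, ¬ I ≤ p) :
    ∃ x ∈ I, x ∉ J ∧ ∀ p ∈ s, x ∉ p := by
  by_contra! hcov
  have hsub : (I : Set R) ⊆ ⋃ p ∈ insert J s, (p : Set R) := fun x hx ↦ by
    by_cases hxJ : x ∈ J
    · exact Set.mem_biUnion (Set.mem_insert J s) hxJ
    · obtain ⟨p, hp, hxp⟩ := hcov x hx hxJ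
      exact Set.mem_biUnion (Set.mem_insert_of_mem J hp) hxp
  obtain ⟨p, rfl | hp, hIp⟩ := (Ideal.subset_union_prime_finite (hs.insert J) (f := id) J J
    fun p hp hpJ _ ↦ hprime p (hp.resolve_left hpJ)).mp hsub
  exacts [hJ hIp, hle p hp hIp]

lemma eq_bot_or_exists_eq_span_singleton_of_free [Nontrivial R] (I : Ideal R) [Module.Free R I] :
    I = ⊥ ∨ ∃ y, I = Ideal.span {y} ∧ IsSMulRegular R y := by
  obtain ⟨ι, b⟩ := (Module.Free.exists_basis R I).some
  have hsub : Subsingleton ι := by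
    refine ⟨fun j l ↦ not_not.mp fun hne ↦ ?_⟩
    have h : (b j : R) • b l = (b l : R) • b j := Subtype.ext (mul_comm _ _)
    have hj : (b j : R) = 0 := by
      simpa [Finsupp.single_eq_of_ne, hne, Ne.symm hne] using congrArg (fun z ↦ b.repr z l) h
    exact b.ne_zero j (Subtype.ext hj)
  rcases isEmpty_or_nonempty ι with hempty | ⟨⟨j⟩⟩
  · exact .inl (Submodule.subsingleton_iff_eq_bot.mp b.repr.toEquiv.subsingleton)
  · refine .inr ⟨b j, ?_, isSMulRegular_iff_right_eq_zero_of_smul.mpr fun r hr ↦ ?_⟩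
    · have h := b.span_eq
      have : Nonempty ι := ⟨j⟩
      rw [Set.range_eq_singleton_iff.mpr fun l ↦ congrArg b (Subsingleton.elim l j)] at h
      simpa [Submodule.map_span] using (congrArg (Submodule.map I.subtype) h).symm
    · have h : r • b j = 0 := Subtype.ext (by simpa [mul_comm] using hr)
      simpa using congrArg (fun z ↦ b.repr z j) h

lemma eq_bot_of_free_annihilator {I : Ideal R} [Module.Free R I.annihilator]
    (hI : I.annihilator ≠ ⊥) : I = ⊥ := by
  have : Nontrivial I.annihilator := Submodule.nontrivial_iff_ne_bot.mpr hI
  refine (Submodule.eq_bot_iff I).mpr fun a ha ↦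
    FaithfulSMul.eq_of_smul_eq_smul (α := I.annihilator) fun r ↦ Subtype.ext ?_
  have h : (r : R) * a = 0 := Submodule.mem_annihilator.mp r.2 a ha
  simpa [mul_comm a] using h

lemma span_insert_eq_iff_span_image_mk_eq_map {x : R} {s : Set R} {J : Ideal R} (hx : x ∈ J) :
    Ideal.span (insert x s) = J ↔
      Ideal.span (Ideal.Quotient.mk (Ideal.span {x}) '' s) =
        J.map (Ideal.Quotient.mk (Ideal.span {x})) := by
  have hle : Ideal.span {x} ≤ J := (Ideal.span_singleton_le_iff_mem J).mpr hx
  rw [← Ideal.map_span, ← (Ideal.comap_injective_of_surjective _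
    Ideal.Quotient.mk_surjective).eq_iff, Ideal.comap_map_of_surjective' _
    Ideal.Quotient.mk_surjective, Ideal.comap_map_of_surjective' _ Ideal.Quotient.mk_surjective,
    Ideal.mk_ker, sup_of_le_left hle, Ideal.span_insert, sup_comm]

lemma spanFinrank_le_spanFinrank_map_quotient_succ {x : R} {J : Ideal R} (hx : x ∈ J) (hJ : J.FG) :
    J.spanFinrank ≤ (J.map (Ideal.Quotient.mk (Ideal.span {x}))).spanFinrank + 1 := by
  have hfg : (J.map (Ideal.Quotient.mk (Ideal.span {x}))).FG := hJ.map _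
  set t := Submodule.generators (J.map (Ideal.Quotient.mk (Ideal.span {x})))
  have htfin : t.Finite := Submodule.FG.finite_generators hfg
  obtain ⟨s, hst, hinj⟩ := Set.exists_image_eq_injOn_of_subset_range
    (Ideal.Quotient.mk_surjective (I := Ideal.span {x}).range_eq ▸ Set.subset_univ t)
  have hsfin : s.Finite := (hst ▸ htfin).of_finite_image hinj
  have hspan : Ideal.span (insert x s) = J := by
    rw [span_insert_eq_iff_span_image_mk_eq_map hx, hst]
    exact Submodule.span_generators _
  calc J.spanFinrank ≤ (insert x s).ncard :=
        hspan ▸ Submodule.spanFinrank_span_le_ncard_of_finite (hsfin.insert x)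
    _ ≤ s.ncard + 1 := Set.ncard_insert_le x s
    _ = _ := by rw [← hinj.ncard_image, hst, Submodule.FG.generators_ncard hfg]

lemma isLocalRing_quotient_span_singleton [IsLocalRing R] {x : R} (hx : x ∈ maximalIdeal R) :
    IsLocalRing (R ⧸ Ideal.span {x}) :=
  have : Nontrivial (R ⧸ Ideal.span {x}) := Ideal.Quotient.nontrivial_iff.mpr
    (Ideal.span_singleton_ne_top hx)
  .of_surjective' (Ideal.Quotient.mk _) Ideal.Quotient.mk_surjective

end CommRing

section LocalRing

variable {R : Type*} [CommRing R] [IsLocalRing R] [IsNoetherianRing R]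

lemma not_maximalIdeal_le_sq (hm : maximalIdeal R ≠ ⊥) :
    ¬ maximalIdeal R ≤ maximalIdeal R ^ 2 := fun hle ↦
  hm <| Submodule.eq_bot_of_le_smul_of_le_jacobson_bot (maximalIdeal R) _
    (IsNoetherian.noetherian _) (by rwa [smul_eq_mul, ← pow_two]) (maximalIdeal_le_jacobson _)

lemma exists_span_insert_eq_maximalIdeal {x : R} (hx : x ∈ maximalIdeal R)
    (hx2 : x ∉ maximalIdeal R ^ 2) :
    ∃ s : Set R, s.Finite ∧ Ideal.span (insert x s) = maximalIdeal R ∧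
      s.ncard + 1 = (maximalIdeal R).spanFinrank := by
  let v := (maximalIdeal R).toCotangent
  have hvx : v ⟨x, hx⟩ ≠ 0 := mt ((maximalIdeal R).toCotangent_eq_zero _).mp hx2
  obtain ⟨b, -, hxb, hvb, hli⟩ := exists_linearIndepOn_extension (v := v)
    (LinearIndepOn.singleton (R := ResidueField R) hvx)
    (Set.subset_univ ({⟨x, hx⟩} : Set (maximalIdeal R)))
  rw [Set.singleton_subset_iff] at hxb
  have hspan : Submodule.span (ResidueField R) (v '' b) = ⊤ := by
    refine top_le_iff.mp fun y _ ↦ ?_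
    obtain ⟨z, rfl⟩ := (maximalIdeal R).toCotangent_surjective y
    exact hvb (Set.mem_image_of_mem v (Set.mem_univ z))
  have hbasis : Module.finrank (ResidueField R) (CotangentSpace R) = b.ncard := by
    rw [Module.finrank_eq_nat_card_basis (Module.Basis.mk hli.linearIndependent
      (by simpa [Set.image_eq_range] using hspan.ge)), Nat.card_coe_set_eq]
  have hbfin : b.Finite := hli.id_image.linearIndependent.setFinite.of_finite_image hli.injOn
  refine ⟨Subtype.val '' (b \ {⟨x, hx⟩}), hbfin.sdiff.image _, ?_, ?_⟩
  · have h : insert x (Subtype.val '' (b \ {⟨x, hx⟩})) = (maximalIdeal R).subtype '' b := by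
      rw [← Set.image_insert_eq (f := Subtype.val) (a := ⟨x, hx⟩), Set.insert_sdiff_self_of_mem hxb]
      rfl
    rw [h, Ideal.span, Submodule.span_image, CotangentSpace.span_image_eq_top_iff.mp hspan,
      Submodule.map_top, Submodule.range_subtype]
  · rw [Subtype.val_injective.injOn.ncard_image, Set.ncard_sdiff_singleton_add_one hxb hbfin,
      spanFinrank_maximalIdeal_eq_finrank_cotangentSpace, hbasis]

lemma spanFinrank_map_quotient_maximalIdeal_succ_le {x : R} (hx : x ∈ maximalIdeal R)
    (hx2 : x ∉ maximalIdeal R ^ 2) :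
    ((maximalIdeal R).map (Ideal.Quotient.mk (Ideal.span {x}))).spanFinrank + 1 ≤
      (maximalIdeal R).spanFinrank := by
  obtain ⟨s, hs, hspan, hcard⟩ := exists_span_insert_eq_maximalIdeal hx hx2
  rw [← hcard, ← (span_insert_eq_iff_span_image_mk_eq_map hx).mp hspan]
  gcongr
  exact (Submodule.spanFinrank_span_le_ncard_of_finite (hs.image _)).trans (Set.ncard_image_le hs)

lemma isRegularLocalRing_iff_exists_finset :
    IsRegularLocalRing R ↔ ∃ s : Finset R, Ideal.span (s : Set R) = maximalIdeal R ∧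
      (s.card : WithBot ℕ∞) = ringKrullDim R := by
  refine ⟨fun h ↦ ?_, fun ⟨s, hspan, hcard⟩ ↦ .of_spanFinrank_maximalIdeal_le R ?_⟩
  · obtain ⟨s, hcard, hspan⟩ := Submodule.FG.exists_span_finset_card_eq_spanFinrank
      (IsNoetherian.noetherian (maximalIdeal R))
    exact ⟨s, hspan, hcard ▸ (isRegularLocalRing_iff R).mp h⟩
  · rw [← hcard, ← hspan, ← Set.ncard_coe_finset]
    exact_mod_cast Submodule.spanFinrank_span_le_ncard_of_finite s.finite_toSet

lemma isRegularLocalRing_of_maximalIdeal_eq_bot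
    (hm : maximalIdeal R = ⊥) : IsRegularLocalRing R := by
  rw [isRegularLocalRing_iff, hm, Submodule.spanFinrank_bot,
    ringKrullDim_eq_zero_of_isField (isField_iff_maximalIdeal_eq.mpr hm), Nat.cast_zero]

lemma isRegularLocalRing_of_quotient_span_singleton {x : R}
    (hx : x ∈ maximalIdeal R) (hreg : IsSMulRegular R x)
    (h : IsRegularLocalRing (R ⧸ Ideal.span {x})) : IsRegularLocalRing R := by
  refine .of_spanFinrank_maximalIdeal_le R ?_
  rw [← ringKrullDim_quotient_span_singleton_succ_eq_ringKrullDim hreg hx,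
    ← (isRegularLocalRing_iff _).mp h,
    ← map_maximalIdeal_of_surjective _ (Ideal.Quotient.mk_surjective (I := Ideal.span {x}))]
  exact_mod_cast spanFinrank_le_spanFinrank_map_quotient_succ hx (IsNoetherian.noetherian _)

lemma eq_bot_of_le_span_singleton_of_notMem {x : R}
    (hx : x ∈ maximalIdeal R) {p : Ideal R} [hp : p.IsPrime] (hle : p ≤ Ideal.span {x})
    (hxp : x ∉ p) : p = ⊥ := by
  refine Submodule.eq_bot_of_le_smul_of_le_jacobson_bot (Ideal.span {x}) p
    (IsNoetherian.noetherian p) (fun a ha ↦ ?_)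
    ((Ideal.span_singleton_le_iff_mem _).mpr (maximalIdeal_le_jacobson _ hx))
  obtain ⟨b, rfl⟩ := Ideal.mem_span_singleton'.mp (hle ha)
  have hb : b ∈ p := (hp.mem_or_mem ha).resolve_right hxp
  exact mul_comm b x ▸ Submodule.smul_mem_smul (Ideal.mem_span_singleton_self x) hb

lemma isDomain_of_isDomain_quotient_span_singleton {x : R}
    (hx : x ∈ maximalIdeal R) (hmin : ∀ p ∈ minimalPrimes R, x ∉ p)
    [IsDomain (R ⧸ Ideal.span {x})] : IsDomain R := by
  have : (Ideal.span {x}).IsPrime := (Ideal.Quotient.isDomain_iff_prime _).mp inferInstance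
  obtain ⟨q, hq, hqx⟩ := Ideal.exists_minimalPrimes_le (bot_le (a := Ideal.span {x}))
  have : q.IsPrime := hq.1.1
  have : (⊥ : Ideal R).IsPrime := eq_bot_of_le_span_singleton_of_notMem hx hqx (hmin q hq) ▸ this
  exact IsDomain.of_bot_isPrime R

lemma isRegularLocalRing_and_ringKrullDim_le_one_of_free_maximalIdeal
    [Module.Free R (maximalIdeal R)] :
    IsRegularLocalRing R ∧ ringKrullDim R ≤ 1 := by
  rcases eq_bot_or_exists_eq_span_singleton_of_free (maximalIdeal R) with hm | ⟨y, hy, hreg⟩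
  · refine ⟨isRegularLocalRing_of_maximalIdeal_eq_bot hm, ?_⟩
    rw [ringKrullDim_eq_zero_of_isField (isField_iff_maximalIdeal_eq.mpr hm)]
    exact zero_le_one
  · have hym : y ∈ maximalIdeal R := hy ▸ Ideal.mem_span_singleton_self y
    have hlocal := isLocalRing_quotient_span_singleton hym
    have hbot : maximalIdeal (R ⧸ Ideal.span {y}) = ⊥ := by
      rw [← map_maximalIdeal_of_surjective _ Ideal.Quotient.mk_surjective, hy,
        Ideal.map_quotient_self]
    refine ⟨isRegularLocalRing_of_quotient_span_singleton hym hreg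
      (isRegularLocalRing_of_maximalIdeal_eq_bot hbot), ?_⟩
    rw [← ringKrullDim_quotient_span_singleton_succ_eq_ringKrullDim hreg hym,
      ringKrullDim_eq_zero_of_isField (isField_iff_maximalIdeal_eq.mpr hbot), zero_add]

end LocalRing

section RegularLocalRing

variable {R : Type*} [CommRing R] [IsRegularLocalRing R]

lemma isRegularLocalRing_quotient_span_singleton {x : R}
    (hx : x ∈ maximalIdeal R) (hx2 : x ∉ maximalIdeal R ^ 2) :
    IsRegularLocalRing (R ⧸ Ideal.span {x}) := by
  have := isLocalRing_quotient_span_singleton hx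
  refine .of_spanFinrank_maximalIdeal_le _ (ENat.WithBot.add_le_add_one_right_iff.mp ?_)
  have hdim : ringKrullDim R ≤ ringKrullDim (R ⧸ Ideal.span {x}) + 1 := by
    have h := ringKrullDim_le_ringKrullDim_quotient_add_card {x}
      (by simpa [ringJacobson_eq_maximalIdeal] using hx)
    rwa [Finset.coe_singleton, Finset.card_singleton, Nat.cast_one] at h
  refine le_trans ?_ hdim
  rw [← IsRegularLocalRing.spanFinrank_maximalIdeal (R := R),
    ← map_maximalIdeal_of_surjective _ (Ideal.Quotient.mk_surjective (I := Ideal.span {x}))]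
  exact_mod_cast spanFinrank_map_quotient_maximalIdeal_succ_le hx hx2

lemma maximalIdeal_notMem_minimalPrimes_of_isRegularLocalRing (hm : maximalIdeal R ≠ ⊥) :
    maximalIdeal R ∉ minimalPrimes R := fun hmin ↦ hm <| by
  have hdim := IsRegularLocalRing.spanFinrank_maximalIdeal (R := R)
  rw [← maximalIdeal_height_eq_ringKrullDim, Ideal.height_eq_zero_iff.mpr hmin] at hdim
  exact (Submodule.spanFinrank_eq_zero_iff_eq_bot (IsNoetherian.noetherian _)).mp
    (by exact_mod_cast hdim)

theorem isDomain_of_isRegularLocalRing (R : Type*) [CommRing R] [IsRegularLocalRing R] :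
    IsDomain R := by
  induction hn : (maximalIdeal R).spanFinrank using Nat.strong_induction_on generalizing R with
  | h n ih =>
    by_cases hm : maximalIdeal R = ⊥
    · exact (isField_iff_maximalIdeal_eq.mpr hm).isDomain
    obtain ⟨x, hx, hx2, hxmin⟩ := exists_mem_notMem_of_finite_primes (not_maximalIdeal_le_sq hm)
      (minimalPrimes.finite_of_isNoetherianRing R) (fun p hp ↦ hp.1.1) fun p hp hle ↦
        maximalIdeal_notMem_minimalPrimes_of_isRegularLocalRing hm
          (le_antisymm (le_maximalIdeal hp.1.1.ne_top) hle ▸ hp)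
    have := isRegularLocalRing_quotient_span_singleton hx hx2
    have hlt := spanFinrank_map_quotient_maximalIdeal_succ_le hx hx2
    rw [map_maximalIdeal_of_surjective _ Ideal.Quotient.mk_surjective] at hlt
    have := ih _ (by omega) (R ⧸ Ideal.span {x}) rfl
    exact isDomain_of_isDomain_quotient_span_singleton hx hxmin

lemma isPrincipalIdealRing_of_isRegularLocalRing (hdim : ringKrullDim R ≤ 1) :
    IsPrincipalIdealRing R := by
  have := isDomain_of_isRegularLocalRing R
  refine ((tfae_of_isNoetherianRing_of_isLocalRing_of_isDomain R).out 5 0).mp ?_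
  rw [← (IsRegularLocalRing.iff_finrank_cotangentSpace R).mp ‹_›] at hdim
  exact_mod_cast hdim

end RegularLocalRing

section Reflexive

variable {R : Type*} [CommRing R] {M : Type*} [AddCommGroup M] [Module R M]

lemma injective_eval_dual :
    Function.Injective (Module.Dual.eval R (Module.Dual R M)) := fun _ _ h ↦
  LinearMap.ext fun m ↦ LinearMap.congr_fun h (Module.Dual.eval R M m)

lemma exists_eq_smul_of_forall_dual_apply_dvd [Module.IsReflexive R M] {z : R}
    (hz : IsRegular z) {m : M} (h : ∀ f : Module.Dual R M, z ∣ f m) : ∃ m', m = z • m' := by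
  choose g hg using h
  -- Division by `z` turns evaluation at `m` into an element of the bidual.
  let G : Module.Dual R (Module.Dual R M) :=
    { toFun := g
      map_add' := fun f₁ f₂ ↦ hz.left <| by
        simp only [mul_add, ← hg, LinearMap.add_apply]
      map_smul' := fun r f ↦ hz.left <| by
        simp only [RingHom.id_apply, smul_eq_mul, mul_left_comm z, ← hg, LinearMap.smul_apply] }
  obtain ⟨m', hm'⟩ := (Module.bijective_dual_eval R M).2 G
  refine ⟨m', (Module.bijective_dual_eval R M).1 (LinearMap.ext fun f ↦ ?_)⟩
  calc f m = z * G f := hg f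
    _ = z * Module.Dual.eval R M m' f := by rw [hm']
    _ = Module.Dual.eval R M (z • m') f := by rw [map_smul, LinearMap.smul_apply, smul_eq_mul]

lemma isTorsionFree_quotSMulTop [Module.IsReflexive R M] {z : R} (hz : IsRegular z)
    [hprime : (Ideal.span {z}).IsPrime] :
    Module.IsTorsionFree (R ⧸ Ideal.span {z}) (QuotSMulTop z M) := by
  refine ⟨fun r hr ↦ isSMulRegular_iff_right_eq_zero_of_smul.mpr fun m hm ↦ ?_⟩
  obtain ⟨r, rfl⟩ := Ideal.Quotient.mk_surjective r
  obtain ⟨m, rfl⟩ := Submodule.Quotient.mk_surjective _ m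
  have hrz : r ∉ Ideal.span {z} := fun h ↦ hr.ne_zero (Ideal.Quotient.eq_zero_iff_mem.mpr h)
  replace hm : r • m ∈ z • (⊤ : Submodule R M) := (Submodule.Quotient.mk_eq_zero _).mp hm
  obtain ⟨m', -, hm' : z • m' = r • m⟩ := (Submodule.mem_smul_pointwise_iff_exists _ _ _).mp hm
  have hdvd (f : Module.Dual R M) : z ∣ f m := by
    have hrf : r * f m ∈ Ideal.span {z} := Ideal.mem_span_singleton.mpr
      ⟨f m', by rw [← smul_eq_mul, ← map_smul, ← hm', map_smul, smul_eq_mul]⟩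
    exact Ideal.mem_span_singleton.mp ((hprime.mem_or_mem hrf).resolve_left hrz)
  obtain ⟨m'', hm''⟩ := exists_eq_smul_of_forall_dual_apply_dvd hz hdvd
  exact (Submodule.Quotient.mk_eq_zero _).mpr
    ((Submodule.mem_smul_pointwise_iff_exists _ _ _).mpr ⟨m'', trivial, hm''.symm⟩)

theorem free_of_isReflexive_of_isRegularLocalRing [IsRegularLocalRing R]
    (hdim : ringKrullDim R ≤ 2) [Module.Finite R M] [Module.IsReflexive R M] :
    Module.Free R M := by
  have := isDomain_of_isRegularLocalRing R
  by_cases hm : maximalIdeal R = ⊥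
  · have := isPrincipalIdealRing_of_isRegularLocalRing
      ((ringKrullDim_eq_zero_of_isField (isField_iff_maximalIdeal_eq.mpr hm)).trans_le zero_le_one)
    infer_instance
  obtain ⟨z, hz, hz2⟩ := SetLike.not_le_iff_exists.mp (not_maximalIdeal_le_sq hm)
  have := isRegularLocalRing_quotient_span_singleton hz hz2
  have := isDomain_of_isRegularLocalRing (R ⧸ Ideal.span {z})
  have : (Ideal.span {z}).IsPrime := (Ideal.Quotient.isDomain_iff_prime _).mp this
  have hreg : IsRegular z := .of_ne_zero fun h ↦ hz2 (h ▸ zero_mem _)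
  have hdimz : ringKrullDim (R ⧸ Ideal.span {z}) ≤ 1 := by
    rw [← ringKrullDim_quotient_span_singleton_succ_eq_ringKrullDim
      (Module.IsTorsionFree.isSMulRegular hreg) hz] at hdim
    exact ENat.WithBot.add_le_add_one_right_iff.mp hdim
  have := isPrincipalIdealRing_of_isRegularLocalRing hdimz
  have := isTorsionFree_quotSMulTop (M := M) hreg
  have : Module.Finite (R ⧸ Ideal.span {z}) (QuotSMulTop z M) :=
    .of_restrictScalars_finite R _ _
  have := Module.finitePresentation_of_finite R M
  exact (Module.free_quotSMulTop_iff_free R M (maximalIdeal_le_jacobson _ hz)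
    (Module.IsTorsionFree.isSMulRegular hreg)).mp inferInstance

end Reflexive

section QuasiReduced

/-- A ring is quasi-reduced if it has no embedded primes and its local rings at the minimal primes
are self-injective, i.e. it satisfies Serre's condition `S₁` and is generically Gorenstein. -/
structure IsQuasiReduced (R : Type*) [CommRing R] : Prop where
  mem_minimalPrimes : ∀ p ∈ associatedPrimes R R, p ∈ minimalPrimes R
  injective_localization : ∀ (p : Ideal R) [p.IsPrime], p ∈ minimalPrimes R →
    Module.Injective (Localization.AtPrime p) (Localization.AtPrime p)

variable {R : Type u} [CommRing R] [IsNoetherianRing R]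

lemma exists_smul_eq_comp_of_injective_localization (p : Ideal R) [p.IsPrime]
    (hinj : Module.Injective (Localization.AtPrime p) (Localization.AtPrime p))
    {K F : Type u} [AddCommGroup K] [Module R K] [AddCommGroup F] [Module R F]
    [Module.Finite R F] {i : K →ₗ[R] F} (hi : Function.Injective i) (f : Module.Dual R K) :
    ∃ s ∉ p, ∃ h : Module.Dual R F, s • f = h ∘ₗ i := by
  let S := p.primeCompl
  let A := Localization.AtPrime p
  let ι : R →ₗ[R] A := Algebra.linearMap R A
  obtain ⟨g, hg⟩ : ∃ g : F →ₗ[R] A, g ∘ₗ i = ι ∘ₗ f := by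
    let fₚ : LocalizedModule S K →ₗ[A] A :=
      (IsLocalizedModule.map S (LocalizedModule.mkLinearMap S K) ι f).extendScalarsOfIsLocalization
        S A
    obtain ⟨gₚ, hgₚ⟩ := hinj.out (LocalizedModule.map S i) (LocalizedModule.map_injective S i hi) fₚ
    refine ⟨gₚ.restrictScalars R ∘ₗ LocalizedModule.mkLinearMap S F, LinearMap.ext fun k ↦ ?_⟩
    have hfₚ : fₚ (LocalizedModule.mkLinearMap S K k) = ι (f k) :=
      IsLocalizedModule.map_apply S (LocalizedModule.mkLinearMap S K) ι f k
    rw [← hgₚ, LocalizedModule.mkLinearMap_apply, LocalizedModule.map_mk] at hfₚ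
    exact hfₚ
  have : Module.FinitePresentation R F := Module.finitePresentation_of_finite R F
  have : IsNoetherian R K := isNoetherian_of_injective i hi
  obtain ⟨h, s, hs⟩ := Module.FinitePresentation.exists_lift_of_isLocalizedModule S ι g
  obtain ⟨t, ht⟩ := Module.Finite.exists_smul_of_comp_eq_of_isLocalizedModule S ι
    (s • f) (h ∘ₗ i) (by
      rw [← LinearMap.comp_assoc, hs, LinearMap.smul_comp, hg, LinearMap.comp_smul])
  exact ⟨t * s, (t * s).2, t • h, by rw [LinearMap.smul_comp, ← ht, smul_smul]; rfl⟩

namespace IsQuasiReduced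

variable (hR : IsQuasiReduced R)
include hR

theorem isReflexive_ker {F G : Type u} [AddCommGroup F] [Module R F] [AddCommGroup G] [Module R G]
    [Module.Finite R F] [Module.IsReflexive R F] (hG : Function.Injective (Module.Dual.eval R G))
    (g : F →ₗ[R] G) : Module.IsReflexive R (LinearMap.ker g) := by
  let i := (LinearMap.ker g).subtype
  refine ⟨⟨fun k₁ k₂ hk ↦ Subtype.ext ((Module.bijective_dual_eval R F).1 (LinearMap.ext fun φ ↦
    LinearMap.congr_fun hk (φ ∘ₗ i))), fun ξ ↦ ?_⟩⟩
  obtain ⟨v, hv⟩ := (Module.bijective_dual_eval R F).2 (ξ ∘ₗ i.dualMap)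
  replace hv (φ : Module.Dual R F) : φ v = ξ (φ ∘ₗ i) := LinearMap.congr_fun hv φ
  have hvg : g v = 0 := hG <| LinearMap.ext fun ψ ↦ by
    have hψ : (ψ ∘ₗ g) ∘ₗ i = 0 := by rw [LinearMap.comp_assoc, LinearMap.comp_ker_subtype,
      LinearMap.comp_zero]
    rw [map_zero]
    exact (hv (ψ ∘ₗ g)).trans (by rw [hψ, map_zero, LinearMap.zero_apply])
  -- Up to a factor outside any given minimal prime, `f` extends to `F`, where `ξ` is evaluation
  -- at `v`; hence no associated prime contains the annihilator of `f v - ξ f`.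
  refine ⟨⟨v, hvg⟩, LinearMap.ext fun f ↦ ?_⟩
  by_contra hne
  obtain ⟨p, hp, hle⟩ := exists_le_isAssociatedPrime_of_isNoetherianRing R _ (sub_ne_zero.mpr hne)
  have hmin := hR.mem_minimalPrimes p hp
  have := hmin.1.1
  obtain ⟨s, hs, h, hsf⟩ := exists_smul_eq_comp_of_injective_localization p
    (hR.injective_localization p hmin) (LinearMap.ker g).subtype_injective f
  refine hs (hle ?_)
  rw [Submodule.mem_colon_singleton, Submodule.mem_bot, smul_sub, sub_eq_zero]
  calc s • f ⟨v, hvg⟩ = (s • f) ⟨v, hvg⟩ := rfl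
    _ = h v := by rw [hsf]; rfl
    _ = s • ξ f := by rw [hv, ← map_smul, hsf]

lemma isReflexive_annihilator (I : Ideal R) : Module.IsReflexive R I.annihilator := by
  have h : I.annihilator = LinearMap.ker
      (LinearMap.toSpanSingleton R (Module.Dual R I) I.subtype) := by
    ext r
    simp [Submodule.mem_annihilator, LinearMap.ext_iff]
  rw [h]
  exact isReflexive_ker hR injective_eval_dual _

end IsQuasiReduced

end QuasiReduced

section Depth

variable {R : Type*} [CommRing R] [IsNoetherianRing R]

lemma not_le_of_mem_associatedPrimes {I p : Ideal R} (hI : I.annihilator = ⊥)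
    (hp : p ∈ associatedPrimes R R) : ¬ I ≤ p := fun hle ↦ by
  obtain ⟨hprime, z, rfl⟩ := isAssociatedPrime_iff.mp hp
  have hz : z ∈ I.annihilator := Submodule.mem_annihilator.mpr fun a ha ↦ by
    simpa [Submodule.mem_colon_singleton, mul_comm] using hle ha
  rw [hI, Submodule.mem_bot] at hz
  exact hprime.ne_top (by simp [hz])

lemma exists_isSMulRegular_mem_maximalIdeal_notMem_sq [IsLocalRing R]
    (hm : maximalIdeal R ≠ ⊥) (hann : (maximalIdeal R).annihilator = ⊥) :
    ∃ x ∈ maximalIdeal R, x ∉ maximalIdeal R ^ 2 ∧ IsSMulRegular R x := by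
  obtain ⟨x, hx, hx2, hxp⟩ := exists_mem_notMem_of_finite_primes (not_maximalIdeal_le_sq hm)
    (associatedPrimes.finite R R) (fun p hp ↦ hp.1) fun p ↦ not_le_of_mem_associatedPrimes hann
  refine ⟨x, hx, hx2, ?_⟩
  by_contra hreg
  have h : x ∈ ⋃ p ∈ associatedPrimes R R, (p : Set R) := by
    rwa [biUnion_associatedPrimes_eq_compl_regular]
  obtain ⟨p, hp, hxmem⟩ := Set.mem_iUnion₂.mp h
  exact hxp p hp hxmem

end Depth

section ProjectiveDimension

open CategoryTheory

lemma hasProjectiveDimensionLE_one_iff_projective_of_exact {A K P M : Type u} [Ring A]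
    [AddCommGroup K] [Module A K] [AddCommGroup P] [Module A P] [AddCommGroup M] [Module A M]
    [Module.Projective A P] {f : K →ₗ[A] P} {g : P →ₗ[A] M} (hf : Function.Injective f)
    (hfg : Function.Exact f g) (hg : Function.Surjective g) :
    HasProjectiveDimensionLE (ModuleCat.of A M) 1 ↔ Module.Projective A K := by
  have hS := ModuleCat.shortComplex_shortExact
    (ModuleCat.shortComplexOfCompEqZero f g hfg.linearMap_comp_eq_zero) hfg hf hg
  rw [IsProjective.iff_projective, projective_iff_hasProjectiveDimensionLT_one]
  exact hS.hasProjectiveDimensionLT_X₃_iff 0 ((IsProjective.iff_projective P).mp inferInstance)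

lemma hasProjectiveDimensionLE_of_comp_eq_id {A : Type*} {M N : Type v} [Ring A]
    [AddCommGroup M] [Module A M] [AddCommGroup N] [Module A N] (n : ℕ)
    [HasProjectiveDimensionLE (ModuleCat.of A N) n] {i : M →ₗ[A] N} {p : N →ₗ[A] M}
    (h : p ∘ₗ i = LinearMap.id) : HasProjectiveDimensionLE (ModuleCat.of A M) n :=
  Retract.hasProjectiveDimensionLT (Y := ModuleCat.of A N)
    ⟨ModuleCat.ofHom i, ModuleCat.ofHom p, ModuleCat.hom_ext h⟩ (n + 1)

variable {R : Type u} [CommRing R]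

lemma hasProjectiveDimensionLE_one_quotSMulTop {P M : Type u} [AddCommGroup P] [Module R P]
    [AddCommGroup M] [Module R M] [Module.Free R P] {f : P →ₗ[R] M} (hf : Function.Surjective f)
    [Module.Free R (LinearMap.ker f)] {x : R} (hx : IsSMulRegular M x) :
    HasProjectiveDimensionLE (ModuleCat.of (R ⧸ Ideal.span {x}) (QuotSMulTop x M)) 1 := by
  have hsurj : Function.Surjective (algebraMap R (R ⧸ Ideal.span {x})) :=
    Ideal.Quotient.mk_surjective
  let i := (LinearMap.ker f).subtype
  have hi : Function.Injective (QuotSMulTop.map x i) := by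
    have hzero : Function.Exact (0 : PUnit.{u + 1} →ₗ[R] LinearMap.ker f) i :=
      (LinearMap.exact_zero_iff_injective _ _).mpr (LinearMap.ker f).subtype_injective
    have h := QuotSMulTop.map_first_exact_on_four_term_exact_of_isSMulRegular_last hzero
      (LinearMap.exact_subtype_ker_map f) hx
    rw [map_zero] at h
    exact (LinearMap.exact_zero_iff_injective _ _).mp h
  exact (hasProjectiveDimensionLE_one_iff_projective_of_exact
    (f := (QuotSMulTop.map x i).extendScalarsOfSurjective hsurj)
    (g := (QuotSMulTop.map x f).extendScalarsOfSurjective hsurj) hi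
    (QuotSMulTop.map_exact x (LinearMap.exact_subtype_ker_map f) hf)
    (QuotSMulTop.map_surjective x hf)).mpr inferInstance

lemma free_maximalIdeal_of_hasProjectiveDimensionLE_one_residueField [IsNoetherianRing R]
    [IsLocalRing R] [HasProjectiveDimensionLE (ModuleCat.of R (ResidueField R)) 1] :
    Module.Free R (maximalIdeal R) := by
  have : Module.Projective R (maximalIdeal R) :=
    (hasProjectiveDimensionLE_one_iff_projective_of_exact (maximalIdeal R).subtype_injective
      (LinearMap.exact_subtype_mkQ (maximalIdeal R)) (maximalIdeal R).mkQ_surjective).mp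
      ‹HasProjectiveDimensionLE (ModuleCat.of R (ResidueField R)) 1›
  exact Module.free_of_flat_of_isLocalRing

lemma exists_linearMap_residueField_apply_eq_one [IsNoetherianRing R] [IsLocalRing R] {x : R}
    (hx : x ∈ maximalIdeal R) (hx2 : x ∉ maximalIdeal R ^ 2) :
    ∃ φ : maximalIdeal R →ₗ[R] ResidueField R, φ ⟨x, hx⟩ = 1 := by
  have hne : (maximalIdeal R).toCotangent ⟨x, hx⟩ ≠ 0 := fun h ↦
    hx2 ((Ideal.toCotangent_eq_zero _ _).mp h)
  obtain ⟨φ, hφ⟩ := Module.Projective.exists_dual_eq_one (ResidueField R) hne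
  exact ⟨φ.restrictScalars R ∘ₗ (maximalIdeal R).toCotangent, hφ⟩

lemma exists_linearMap_quotSMulTop_apply_mk_eq_one [IsNoetherianRing R] [IsLocalRing R]
    {x : R} (hx : x ∈ maximalIdeal R) (hx2 : x ∉ maximalIdeal R ^ 2)
    [IsLocalRing (R ⧸ Ideal.span {x})] :
    ∃ p : QuotSMulTop x (maximalIdeal R) →ₗ[R ⧸ Ideal.span {x}]
        ResidueField (R ⧸ Ideal.span {x}), p (Submodule.Quotient.mk ⟨x, hx⟩) = 1 := by
  let A := R ⧸ Ideal.span {x}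
  obtain ⟨φ, hφ⟩ := exists_linearMap_residueField_apply_eq_one hx hx2
  have hlocal : IsLocalHom (algebraMap R A) := .of_surjective _ Ideal.Quotient.mk_surjective
  have hres (r : R) (hr : r ∈ maximalIdeal R) : algebraMap R (ResidueField A) r = 0 :=
    (residue_eq_zero_iff _).mpr ((map_mem_nonunits_iff (algebraMap R A) r).mpr hr)
  let ρ : ResidueField R →ₗ[R] ResidueField A :=
    (maximalIdeal R).liftQ (Algebra.linearMap R (ResidueField A)) hres
  have hker : x • (⊤ : Submodule R (maximalIdeal R)) ≤ LinearMap.ker (ρ ∘ₗ φ) := by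
    rintro _ ⟨w, -, rfl⟩
    change (ρ ∘ₗ φ) (x • w) = 0
    rw [map_smul, ← algebraMap_smul (ResidueField A), hres x hx, zero_smul]
  exact ⟨(Submodule.liftQ _ (ρ ∘ₗ φ) hker).extendScalarsOfSurjective Ideal.Quotient.mk_surjective,
    (congrArg ρ hφ).trans (map_one (algebraMap R (ResidueField A)))⟩

lemma maximalIdeal_le_ker_toSpanSingleton_mk [IsLocalRing R] {x : R} (hx : x ∈ maximalIdeal R)
    [IsLocalRing (R ⧸ Ideal.span {x})] :
    maximalIdeal (R ⧸ Ideal.span {x}) ≤ LinearMap.ker (LinearMap.toSpanSingleton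
      (R ⧸ Ideal.span {x}) (QuotSMulTop x (maximalIdeal R)) (Submodule.Quotient.mk ⟨x, hx⟩)) := by
  intro a ha
  have hlocal : IsLocalHom (Ideal.Quotient.mk (Ideal.span {x})) :=
    .of_surjective _ Ideal.Quotient.mk_surjective
  obtain ⟨r, rfl⟩ := Ideal.Quotient.mk_surjective a
  have hr : r ∈ maximalIdeal R := (map_mem_nonunits_iff _ r).mp ha
  exact (Submodule.Quotient.mk_eq_zero _).mpr ⟨⟨r, hr⟩, trivial, Subtype.ext (mul_comm _ _)⟩

lemma hasProjectiveDimensionLE_one_residueField_quotient_span_singleton [IsNoetherianRing R]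
    [IsLocalRing R] {x : R} (hx : x ∈ maximalIdeal R) (hx2 : x ∉ maximalIdeal R ^ 2)
    [IsLocalRing (R ⧸ Ideal.span {x})] [HasProjectiveDimensionLE
      (ModuleCat.of (R ⧸ Ideal.span {x}) (QuotSMulTop x (maximalIdeal R))) 1] :
    HasProjectiveDimensionLE
      (ModuleCat.of (R ⧸ Ideal.span {x}) (ResidueField (R ⧸ Ideal.span {x}))) 1 := by
  obtain ⟨p, hp⟩ := exists_linearMap_quotSMulTop_apply_mk_eq_one hx hx2
  refine hasProjectiveDimensionLE_of_comp_eq_id 1 (p := p)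
    (i := Submodule.liftQ _ _ (maximalIdeal_le_ker_toSpanSingleton_mk hx))
    (LinearMap.ext fun z ↦ ?_)
  obtain ⟨a, rfl⟩ := residue_surjective z
  change p (a • _) = residue _ a
  rw [map_smul, hp, Algebra.smul_def, mul_one]
  rfl

end ProjectiveDimension

section Main

variable {R : Type u} [CommRing R] [IsNoetherianRing R] [IsLocalRing R]

lemma isRegularLocalRing_and_ringKrullDim_le_two_of_isSMulRegular {x : R}
    (hx : x ∈ maximalIdeal R) (hx2 : x ∉ maximalIdeal R ^ 2) (hreg : IsSMulRegular R x)
    {P : Type u} [AddCommGroup P] [Module R P] [Module.Free R P] {f : P →ₗ[R] maximalIdeal R}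
    (hf : Function.Surjective f) [Module.Free R (LinearMap.ker f)] :
    IsRegularLocalRing R ∧ ringKrullDim R ≤ 2 := by
  have hlocal := isLocalRing_quotient_span_singleton hx
  have hpd := hasProjectiveDimensionLE_one_quotSMulTop hf (hreg.submodule (maximalIdeal R) x)
  have hpdk := hasProjectiveDimensionLE_one_residueField_quotient_span_singleton hx hx2
  have hfree := free_maximalIdeal_of_hasProjectiveDimensionLE_one_residueField
    (R := R ⧸ Ideal.span {x})
  obtain ⟨hregular, hdim⟩ :=
    isRegularLocalRing_and_ringKrullDim_le_one_of_free_maximalIdeal (R := R ⧸ Ideal.span {x})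
  refine ⟨isRegularLocalRing_of_quotient_span_singleton hx hreg hregular, ?_⟩
  calc ringKrullDim R = ringKrullDim (R ⧸ Ideal.span {x}) + 1 :=
      (ringKrullDim_quotient_span_singleton_succ_eq_ringKrullDim hreg hx).symm
    _ ≤ 1 + 1 := by gcongr
    _ = 2 := one_add_one_eq_two

theorem IsQuasiReduced.isRegularLocalRing_and_ringKrullDim_le_two_of_forall_free
    (hR : IsQuasiReduced R)
    (H : ∀ (M : Type u) [AddCommGroup M] [Module R M], Module.Finite R M →
      Module.IsReflexive R M → Module.Free R M) :
    IsRegularLocalRing R ∧ ringKrullDim R ≤ 2 := by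
  by_cases hm : maximalIdeal R = ⊥
  · refine ⟨isRegularLocalRing_of_maximalIdeal_eq_bot hm, ?_⟩
    rw [ringKrullDim_eq_zero_of_isField (isField_iff_maximalIdeal_eq.mpr hm)]
    exact zero_le_two
  have hann : (maximalIdeal R).annihilator = ⊥ := by
    by_contra hne
    have := H _ inferInstance (hR.isReflexive_annihilator (maximalIdeal R))
    exact hm (eq_bot_of_free_annihilator hne)
  obtain ⟨x, hx, hx2, hreg⟩ := exists_isSMulRegular_mem_maximalIdeal_notMem_sq hm hann
  obtain ⟨n, f, hf⟩ := Module.Finite.exists_fin' R (maximalIdeal R)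
  have hker : Module.Free R (LinearMap.ker f) := by
    rw [← LinearMap.ker_comp_of_ker_eq_bot f (maximalIdeal R).ker_subtype]
    exact H _ inferInstance (hR.isReflexive_ker (Module.bijective_dual_eval R R).1 _)
  exact isRegularLocalRing_and_ringKrullDim_le_two_of_isSMulRegular hx hx2 hreg hf

end Main

end

/-- Let `(R,𝔪)` be a noetherian local ring which is quasi-reduced:
every associated prime of `R` is a minimal prime (Serre's condition `S₁`) and for every
minimal prime `𝔭` the localization `R_𝔭` is injective as a module over itself
(`R` is generically Gorenstein). Then every finitely generated reflexive `R`-module is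
free if and only if `R` is a regular local ring (the maximal ideal is generated by as
many elements as the Krull dimension) of Krull dimension at most two. -/
theorem stmt15 (R : Type u) [CommRing R] [IsNoetherianRing R] [IsLocalRing R]
    (hS1 : ∀ p ∈ associatedPrimes R R, p ∈ minimalPrimes R)
    (hG0 : ∀ (p : Ideal R) [p.IsPrime], p ∈ minimalPrimes R →
      Module.Injective (Localization.AtPrime p) (Localization.AtPrime p)) :
    (∀ (M : Type u) [AddCommGroup M] [Module R M], Module.Finite R M →
      Module.IsReflexive R M → Module.Free R M) ↔
    ((∃ s : Finset R, Ideal.span (s : Set R) = IsLocalRing.maximalIdeal R ∧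
      (s.card : WithBot ℕ∞) = ringKrullDim R) ∧ ringKrullDim R ≤ 2) := by
  rw [← isRegularLocalRing_iff_exists_finset]
  exact ⟨IsQuasiReduced.isRegularLocalRing_and_ringKrullDim_le_two_of_forall_free ⟨hS1, hG0⟩,
    fun ⟨_, hdim⟩ _ _ _ _ _ ↦ free_of_isReflexive_of_isRegularLocalRing hdim⟩
end

section
/- Let (R,𝔪) be a noetherian local ring with 𝔪² = 0 and 𝔪 not generated by a single element, and let M be a finitely generated nonzero R-module which is not free. Then M is not reflexive; moreover the dual M* is nonzero, finitely generated, not free, and not reflexive (so that by iteration no iterated dual M^{ℓ*} is reflexive). -/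
/-!
Write `M ≅ N × Rⁿ` with `n` maximal, so that no functional on `N` is onto; `N ≠ 0` when `M` is not
free. Functionals on `N` then take values in `𝔪`, so `𝔪² = 0` makes `N*` a nonzero vector space
over `k = R/𝔪`, and `N*` again has no surjective functional since `𝔪 ≠ 0`. If `N` or `N*` were
reflexive it would therefore be a nonzero `k`-vector space, and its direct summand `k` would be
reflexive. But `k* ≅ 𝔪`, so reflexivity of `k` says that every linear map `𝔪 → R` is multiplication
by an element of `R`; applied to the projection of `𝔪` onto a line this forces `dim 𝔪 ≤ 1`.
-/

section CommRing

variable {R : Type*} [CommRing R] {M : Type*} [AddCommGroup M] [Module R M]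

theorem mul_eq_zero_of_sq_eq_bot {I : Ideal R} (hI : I ^ 2 = ⊥) {a b : R} (ha : a ∈ I)
    (hb : b ∈ I) : a * b = 0 := by
  rw [← Ideal.mem_bot, ← hI, sq]
  exact Ideal.mul_mem_mul ha hb

theorem isTorsionBySet_of_sq_eq_bot {I : Ideal R} (hI : I ^ 2 = ⊥) :
    Module.IsTorsionBySet R I I :=
  fun y a ↦ Subtype.ext (mul_eq_zero_of_sq_eq_bot hI a.2 y.2)

theorem smul_top_ne_top_of_isNilpotent [Nontrivial M] {I : Ideal R} (hI : IsNilpotent I) :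
    I • (⊤ : Submodule R M) ≠ ⊤ := by
  intro h
  obtain ⟨n, hn⟩ := hI
  have hpow : ∀ k : ℕ, I ^ k • (⊤ : Submodule R M) = ⊤ := by
    intro k
    induction k with
    | zero => simp
    | succ k ih => rw [pow_succ, Submodule.mul_smul, h, ih]
  have htop := hpow n
  rw [hn, Submodule.zero_eq_bot, Submodule.bot_smul] at htop
  exact bot_ne_top htop

variable (R M) in
/-- A module without direct summands isomorphic to `R`. Since `R` is projective, such summands
correspond to surjective functionals, and the absence of the latter is taken as the definition. -/
def HasNoFreeSummand : Prop :=
  ∀ f : Module.Dual R M, ¬ Function.Surjective f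

theorem HasNoFreeSummand.of_isTorsionBySet {I : Ideal R} (hI : I ≠ ⊥)
    (hM : Module.IsTorsionBySet R M I) : HasNoFreeSummand R M := by
  intro f hf
  obtain ⟨a, ha, ha0⟩ := Submodule.exists_mem_ne_zero_of_ne_bot hI
  obtain ⟨y, hy⟩ := hf 1
  apply ha0
  calc a = a • f y := by rw [hy, smul_eq_mul, mul_one]
    _ = f (a • y) := (map_smul f a y).symm
    _ = 0 := by rw [@hM y ⟨a, ha⟩, map_zero]

variable (R M) in
theorem exists_surjective_pi_and_not_surjective_pi_succ [Nontrivial R] [Module.Finite R M] :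
    ∃ n : ℕ, (∃ g : M →ₗ[R] (Fin n → R), Function.Surjective g) ∧
      ∀ g : M →ₗ[R] (Fin (n + 1) → R), ¬ Function.Surjective g := by
  obtain ⟨k, q, hq⟩ := Module.Finite.exists_fin' R M
  have hbound : ∀ g : M →ₗ[R] (Fin (k + 1) → R), ¬ Function.Surjective g := fun g hg ↦
    (Nat.lt_succ_self k).not_ge (le_of_fin_surjective R (g ∘ₗ q) (hg.comp hq))
  have hzero : ∃ g : M →ₗ[R] (Fin 0 → R), Function.Surjective g :=
    ⟨0, Function.surjective_to_subsingleton _⟩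
  obtain ⟨n, hn, hn'⟩ := Nat.exists_not_and_succ_of_not_zero_of_exists
    (p := fun n ↦ ∀ g : M →ₗ[R] (Fin n → R), ¬ Function.Surjective g)
    (by simpa using hzero) ⟨k + 1, hbound⟩
  exact ⟨n, by simpa using hn, hn'⟩

theorem nonempty_equiv_ker_prod {P : Type*} [AddCommGroup P] [Module R P]
    [Module.Projective R P] (g : M →ₗ[R] P) (hg : Function.Surjective g) :
    Nonempty (M ≃ₗ[R] LinearMap.ker g × P) := by
  obtain ⟨s, hs⟩ := Module.projective_lifting_property g .id hg
  exact ⟨(g.exact_subtype_ker_map.splitSurjectiveEquiv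
    (LinearMap.ker g).injective_subtype ⟨s, hs⟩).1⟩

variable (R M) in
theorem exists_hasNoFreeSummand_equiv_prod_pi [Nontrivial R] [Module.Finite R M] :
    ∃ (n : ℕ) (N : Submodule R M), HasNoFreeSummand R N ∧ Nonempty (M ≃ₗ[R] N × (Fin n → R)) := by
  obtain ⟨n, ⟨g, hg⟩, hmax⟩ := exists_surjective_pi_and_not_surjective_pi_succ R M
  obtain ⟨e⟩ := nonempty_equiv_ker_prod g hg
  refine ⟨n, LinearMap.ker g, fun f hf ↦ ?_, ⟨e⟩⟩
  let c : (R × (Fin n → R)) ≃ₗ[R] (Fin (n + 1) → R) := Fin.consLinearEquiv R fun _ ↦ R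
  exact hmax (c.toLinearMap ∘ₗ f.prodMap .id ∘ₗ e.toLinearMap)
    (c.surjective.comp ((hf.prodMap Function.surjective_id).comp e.surjective))

end CommRing

section LocalRing

open IsLocalRing

variable {R : Type*} [CommRing R] [IsLocalRing R] {N : Type*} [AddCommGroup N] [Module R N]

theorem exists_residueField_retract (hN : Module.IsTorsionBySet R N (maximalIdeal R)) {x : N}
    (hx : x ≠ 0) :
    ∃ (i : ResidueField R →ₗ[R] N) (p : N →ₗ[R] ResidueField R), p ∘ₗ i = .id ∧ i 1 = x := by
  let _ : Module (ResidueField R) N := hN.module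
  have : IsScalarTower R (ResidueField R) N := hN.isScalarTower
  obtain ⟨φ, hφ⟩ := Module.Projective.exists_dual_eq_one (ResidueField R) hx
  refine ⟨(LinearMap.toSpanSingleton (ResidueField R) N x).restrictScalars R,
    φ.restrictScalars R, LinearMap.ext fun c ↦ ?_, ?_⟩
  · simp [hφ]
  · simp

variable (R) in
theorem isTorsionBySet_residueField :
    Module.IsTorsionBySet R (ResidueField R) (maximalIdeal R) := by
  rintro c ⟨a, ha⟩
  rw [Algebra.smul_def, ResidueField.algebraMap_eq, (residue_eq_zero_iff a).2 ha, zero_mul]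

namespace HasNoFreeSummand

theorem apply_mem_maximalIdeal (hN : HasNoFreeSummand R N) (f : Module.Dual R N) (x : N) :
    f x ∈ maximalIdeal R := by
  rw [mem_maximalIdeal, mem_nonunits_iff]
  exact fun hu ↦ hN f fun r ↦ ⟨(r * ↑hu.unit⁻¹) • x, by simp [mul_assoc]⟩

theorem not_projective [Nontrivial N] (hnil : IsNilpotent (maximalIdeal R))
    (hN : HasNoFreeSummand R N) : ¬ Module.Projective R N := by
  intro hproj
  obtain ⟨s, hs⟩ := Module.projective_def.1 hproj
  refine smul_top_ne_top_of_isNilpotent (M := N) hnil (eq_top_iff.2 fun x _ ↦ ?_)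
  rw [← hs x, Finsupp.linearCombination_apply]
  exact Submodule.sum_mem _ fun y _ ↦ Submodule.smul_mem_smul
    (hN.apply_mem_maximalIdeal (Finsupp.lapply y ∘ₗ s) x) trivial

end HasNoFreeSummand

section SquareZero

variable (hm : maximalIdeal R ^ 2 = ⊥)
include hm

theorem nontrivial_dual_of_maximalIdeal_sq_eq_bot (hbot : maximalIdeal R ≠ ⊥) [Nontrivial N] :
    Nontrivial (Module.Dual R N) := by
  have hnil : IsNilpotent (maximalIdeal R) := ⟨2, hm⟩
  have : Nontrivial (N ⧸ maximalIdeal R • (⊤ : Submodule R N)) :=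
    Submodule.Quotient.nontrivial_iff.2 (smul_top_ne_top_of_isNilpotent hnil)
  obtain ⟨z, hz⟩ := exists_ne (0 : N ⧸ maximalIdeal R • (⊤ : Submodule R N))
  obtain ⟨i, p, hpi, hi⟩ :=
    exists_residueField_retract (Module.isTorsionBySet_quotient_ideal_smul N _) hz
  obtain ⟨y, rfl⟩ := Submodule.mkQ_surjective _ z
  obtain ⟨a, ha, ha0⟩ := Submodule.exists_mem_ne_zero_of_ne_bot hbot
  obtain ⟨j, -, -, hj⟩ := exists_residueField_retract (isTorsionBySet_of_sq_eq_bot hm)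
    (x := ⟨a, ha⟩) (by simpa using ha0)
  let f : Module.Dual R N := (maximalIdeal R).subtype ∘ₗ j ∘ₗ p ∘ₗ Submodule.mkQ _
  have hpy : p (Submodule.mkQ _ y) = 1 := by rw [← hi]; exact LinearMap.congr_fun hpi 1
  have hfy : f y = a := by simp only [f, LinearMap.comp_apply, hpy, hj, Submodule.subtype_apply]
  exact ⟨f, 0, fun h ↦ ha0 (by rw [← hfy, h, LinearMap.zero_apply])⟩

theorem HasNoFreeSummand.isTorsionBySet_dual (hN : HasNoFreeSummand R N) :
    Module.IsTorsionBySet R (Module.Dual R N) (maximalIdeal R) :=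
  fun f a ↦ LinearMap.ext fun x ↦
    mul_eq_zero_of_sq_eq_bot hm a.2 (hN.apply_mem_maximalIdeal f x)

theorem exists_forall_eq_mul_of_isReflexive_residueField (hbot : maximalIdeal R ≠ ⊥)
    [Module.IsReflexive R (ResidueField R)] (h : maximalIdeal R →ₗ[R] R) :
    ∃ r : R, ∀ y : maximalIdeal R, h y = r * y := by
  have hk : HasNoFreeSummand R (ResidueField R) :=
    .of_isTorsionBySet hbot (isTorsionBySet_residueField R)
  let e : Module.Dual R (ResidueField R) →ₗ[R] maximalIdeal R :=
    LinearMap.codRestrict _ (Module.Dual.eval R _ 1) fun f ↦ hk.apply_mem_maximalIdeal f 1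
  obtain ⟨c, hc⟩ := (Module.bijective_dual_eval R (ResidueField R)).surjective (h ∘ₗ e)
  obtain ⟨r, rfl⟩ := residue_surjective c
  refine ⟨r, fun y ↦ ?_⟩
  rcases eq_or_ne y 0 with rfl | hy
  · simp
  obtain ⟨i, -, -, hi⟩ := exists_residueField_retract (isTorsionBySet_of_sq_eq_bot hm) hy
  let f : Module.Dual R (ResidueField R) := (maximalIdeal R).subtype ∘ₗ i
  have hf : e f = y := hi
  have hr : residue R r = r • (1 : ResidueField R) := by
    rw [Algebra.smul_def, ResidueField.algebraMap_eq, mul_one]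
  calc h y = Module.Dual.eval R _ (residue R r) f := by rw [hc, LinearMap.comp_apply, hf]
    _ = r * f 1 := by rw [Module.Dual.eval_apply, hr, map_smul, smul_eq_mul]
    _ = r * y := congrArg (r * ·) (congrArg Subtype.val hf)

theorem isPrincipal_maximalIdeal_of_forall_eq_mul
    (hmul : ∀ h : maximalIdeal R →ₗ[R] R, ∃ r : R, ∀ y : maximalIdeal R, h y = r * y) :
    (maximalIdeal R).IsPrincipal := by
  rcases eq_or_ne (maximalIdeal R) ⊥ with hbot | hbot
  · rw [hbot]
    infer_instance
  obtain ⟨x, hx, hx0⟩ := Submodule.exists_mem_ne_zero_of_ne_bot hbot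
  obtain ⟨i, p, hpi, hi⟩ := exists_residueField_retract (isTorsionBySet_of_sq_eq_bot hm)
    (x := ⟨x, hx⟩) (by simpa using hx0)
  obtain ⟨r, hr⟩ := hmul ((maximalIdeal R).subtype ∘ₗ i ∘ₗ p)
  have hrx : r * x = x := by
    have hp : p ⟨x, hx⟩ = 1 := by rw [← hi]; exact LinearMap.congr_fun hpi 1
    simpa [hp, hi] using (hr ⟨x, hx⟩).symm
  have hunit : IsUnit r := notMem_maximalIdeal.1 fun hmem ↦
    hx0 (hrx ▸ mul_eq_zero_of_sq_eq_bot hm hmem hx)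
  refine ⟨x, le_antisymm (fun y hy ↦ ?_) ((Ideal.span_singleton_le_iff_mem _).2 hx)⟩
  obtain ⟨s, hs⟩ := residue_surjective (p ⟨y, hy⟩)
  have hry : r * y = s * x := by
    have hps : p ⟨y, hy⟩ = s • 1 := by
      rw [← hs, Algebra.smul_def, ResidueField.algebraMap_eq, mul_one]
    simpa [hps, hi] using (hr ⟨y, hy⟩).symm
  exact Ideal.mem_span_singleton.2 (hunit.dvd_mul_left.1 (hry ▸ dvd_mul_left x s))

variable (hmp : ¬ (maximalIdeal R).IsPrincipal)
include hmp

theorem not_isReflexive_residueField : ¬ Module.IsReflexive R (ResidueField R) := fun _ ↦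
  have hbot : maximalIdeal R ≠ ⊥ := fun h ↦ hmp (h ▸ bot_isPrincipal)
  hmp (isPrincipal_maximalIdeal_of_forall_eq_mul hm
    (exists_forall_eq_mul_of_isReflexive_residueField hm hbot))

theorem HasNoFreeSummand.not_isReflexive [Nontrivial N] (hN : HasNoFreeSummand R N) :
    ¬ Module.IsReflexive R N := by
  intro hrefl
  have hbot : maximalIdeal R ≠ ⊥ := fun h ↦ hmp (h ▸ bot_isPrincipal)
  have hbidual : Module.IsTorsionBySet R (Module.Dual R (Module.Dual R N)) (maximalIdeal R) :=
    (of_isTorsionBySet hbot (hN.isTorsionBySet_dual hm)).isTorsionBySet_dual hm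
  have htorsion : Module.IsTorsionBySet R N (maximalIdeal R) := fun x a ↦
    (Module.bijective_dual_eval R N).injective <| by
      rw [map_smul, map_zero]
      exact @hbidual (Module.Dual.eval R N x) a
  obtain ⟨x, hx⟩ := exists_ne (0 : N)
  obtain ⟨i, p, hpi, -⟩ := exists_residueField_retract htorsion hx
  exact not_isReflexive_residueField hm hmp (.of_split i p hpi)

end SquareZero

end LocalRing

theorem stmt16_general {R : Type*} [CommRing R] [IsLocalRing R]
    (hm : IsLocalRing.maximalIdeal R ^ 2 = ⊥)
    (hmp : ¬ (IsLocalRing.maximalIdeal R).IsPrincipal)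
    {M : Type*} [AddCommGroup M] [Module R M] [Module.Finite R M] (hnf : ¬ Module.Free R M) :
    ¬ Module.IsReflexive R M ∧
      Nontrivial (Module.Dual R M) ∧
      ¬ Module.Free R (Module.Dual R M) ∧
      ¬ Module.IsReflexive R (Module.Dual R M) := by
  have hbot : IsLocalRing.maximalIdeal R ≠ ⊥ := fun h ↦ hmp (h ▸ bot_isPrincipal)
  obtain ⟨n, N, hN, ⟨e⟩⟩ := exists_hasNoFreeSummand_equiv_prod_pi R M
  have : Nontrivial N := not_subsingleton_iff_nontrivial.1 fun _ ↦ hnf (.of_equiv e.symm)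
  have : Nontrivial M := N.subtype_injective.nontrivial
  have : Nontrivial (Module.Dual R N) := nontrivial_dual_of_maximalIdeal_sq_eq_bot hm hbot
  have hN' : HasNoFreeSummand R (Module.Dual R N) :=
    .of_isTorsionBySet hbot (hN.isTorsionBySet_dual hm)
  let i : N →ₗ[R] M := e.symm ∘ₗ LinearMap.inl R N (Fin n → R)
  let p : M →ₗ[R] N := LinearMap.fst R N (Fin n → R) ∘ₗ e
  have hpi : p ∘ₗ i = .id := by ext; simp [p, i]
  have hpi' : i.dualMap ∘ₗ p.dualMap = .id := by
    rw [LinearMap.dualMap_comp_dualMap, hpi, LinearMap.dualMap_id]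
  exact ⟨fun _ ↦ hN.not_isReflexive hm hmp (.of_split i p hpi),
    nontrivial_dual_of_maximalIdeal_sq_eq_bot hm hbot,
    fun _ ↦ hN'.not_projective ⟨2, hm⟩ (.of_split p.dualMap i.dualMap hpi'),
    fun _ ↦ hN'.not_isReflexive hm hmp (.of_split p.dualMap i.dualMap hpi')⟩

/-- Let `(R,𝔪)` be a noetherian local ring with `𝔪² = 0` and `𝔪` not
generated by a single element, and let `M` be a finitely generated nonzero `R`-module
which is not free. Then `M` is not reflexive; moreover the dual `M*` is nonzero, finitely
generated, not free, and not reflexive (so, by iteration, no iterated dual `M^{ℓ*}` is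
reflexive). -/
theorem stmt16 (R : Type u) [CommRing R] [IsNoetherianRing R] [IsLocalRing R]
    (hm : IsLocalRing.maximalIdeal R ^ 2 = ⊥)
    (hmp : ¬ (IsLocalRing.maximalIdeal R).IsPrincipal)
    (M : Type u) [AddCommGroup M] [Module R M] [Module.Finite R M]
    (hM : Nontrivial M) (hnf : ¬ Module.Free R M) :
    ¬ Module.IsReflexive R M ∧
      Nontrivial (Module.Dual R M) ∧
      Module.Finite R (Module.Dual R M) ∧
      ¬ Module.Free R (Module.Dual R M) ∧
      ¬ Module.IsReflexive R (Module.Dual R M) := by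
  obtain ⟨hrefl, hnt, hfree, hrefl'⟩ := stmt16_general hm hmp hnf
  exact ⟨hrefl, hnt, inferInstance, hfree, hrefl'⟩
end

section
/- Let (R,𝔪) be a noetherian local ring and let M be a finitely generated weakly reflexive R-module. Then the dual M* is reflexive (and hence every iterated dual M^{ℓ*} with ℓ ≥ 1 is reflexive). -/
/-!
The transpose of the evaluation map `M → M**` is a retraction of the evaluation map `M* → M***`
of the dual. When `M → M**` is surjective its transpose is also injective, so the two maps are
mutually inverse.
-/

open Function Module

theorem leftInverse_dualMap_eval (R M : Type*) [CommSemiring R] [AddCommMonoid M] [Module R M] :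
    LeftInverse (Dual.eval R M).dualMap (Dual.eval R (Dual R M)) :=
  fun _ ↦ rfl

theorem stmt17_general (R M : Type*) [CommSemiring R] [AddCommMonoid M] [Module R M]
    (h : Surjective (Dual.eval R M)) : IsReflexive R (Dual R M) where
  bijective_dual_eval' := by
    have retraction := leftInverse_dualMap_eval R M
    have transpose_injective : Injective (Dual.eval R M).dualMap :=
      LinearMap.dualMap_injective_of_surjective h
    exact ⟨retraction.injective,
      (retraction.rightInverse_of_injective transpose_injective).surjective⟩

/-- Let `(R,𝔪)` be a noetherian local ring and let `M` be a finitely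
generated weakly reflexive `R`-module (the evaluation map `M → M**` is surjective). Then
the dual `M*` is reflexive (and hence, by iteration, every iterated dual `M^{ℓ*}` with
`ℓ ≥ 1` is reflexive). -/
theorem stmt17 (R : Type u) [CommRing R] [IsNoetherianRing R] [IsLocalRing R]
    (M : Type u) [AddCommGroup M] [Module R M] [Module.Finite R M]
    (h : Function.Surjective (Module.Dual.eval R M)) :
    Module.IsReflexive R (Module.Dual R M) :=
  stmt17_general R M h
end

section
/- Let (R,𝔪) be a noetherian local ring and let M be a finitely generated R-module which is locally free on the punctured spectrum, i.e., for every prime ideal 𝔭 ≠ 𝔪 the localization M_𝔭 is a free R_𝔭-module. Assume there exists an M-regular sequence of length two consisting of elements of 𝔪, and there exists a Hom_R(M,M)-regular sequence of length three consisting of elements of 𝔪 (where Hom_R(M,M) is regarded as an R-module). Then Ext¹_R(M,M) = 0. -/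
open CategoryTheory

/-!
Resolve `0 → K → P → M → 0` with `P` projective; then
`0 → Hom(M, N) → Hom(P, N) → Hom(K, N) → Ext¹(M, N) → 0` is exact. A weakly regular pair on `N` is
weakly regular on `Hom(P, N)` and `Hom(K, N)`, and `Hom(M, N)` has a weakly regular triple, so if
`T` is killed by `I`, chasing `Ext(T, -)` along this sequence leaves `Hom(T, Ext¹(M, N)) = 0`. Hence
`Ext¹(M, N)` has no `I`-torsion. On the other hand, for a prime `p` not containing `I` the map
`P → M` splits up to an element outside `p`, and that element kills `Ext¹(M, N)`. So the associated
primes of `Ext¹(M, N)` all contain `I`; being annihilators of elements, they would produce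
`I`-torsion, so there are none.
-/

universe u v

section Torsion

variable {R : Type*} [CommRing R] {E : Type*} [AddCommGroup E] [Module R E] {I : Ideal R}

lemma subsingleton_of_torsionBySet_eq_bot [IsNoetherianRing R]
    (hI : I ≤ (Module.annihilator R E).radical)
    (hE : Submodule.torsionBySet R E I = ⊥) : Subsingleton E := by
  by_contra! hE'
  obtain ⟨p, hp⟩ := associatedPrimes.nonempty R E
  have hann : Module.annihilator R E ≤ p :=
    (Submodule.annihilator_top (R := R) (M := E)).symm.trans_le hp.annihilator_le
  obtain ⟨hprime, e, rfl⟩ := isAssociatedPrime_iff.mp hp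
  have hIe : I ≤ (⊥ : Submodule R E).colon {e} := hI.trans (hprime.radical_le_iff.mpr hann)
  have he : e ∈ Submodule.torsionBySet R E I :=
    (Submodule.mem_torsionBySet_iff _ _).mpr fun a => by
      simpa using Submodule.mem_colon_singleton.mp (hIe a.2)
  rw [hE, Submodule.mem_bot] at he
  exact hprime.ne_top (by simp [he])

lemma le_radical_annihilator_of_forall_exists_smul_eq_zero
    (h : ∀ (p : Ideal R) [p.IsPrime], ¬ I ≤ p → ∃ s ∈ p.primeCompl, ∀ e : E, s • e = 0) :
    I ≤ (Module.annihilator R E).radical := by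
  rw [Ideal.radical_eq_sInf]
  refine le_sInf fun p ⟨hp, hprime⟩ => ?_
  by_contra hIp
  obtain ⟨s, hs, hsE⟩ := h p hIp
  exact hs (hp (Module.mem_annihilator.mpr hsE))

end Torsion

section LinearMap

open Pointwise RingTheory.Sequence

variable {R : Type*} [CommRing R] {L N : Type*} [AddCommGroup L] [Module R L]
  [AddCommGroup N] [Module R N] {x y : R}

lemma isSMulRegular_linearMap (hx : IsSMulRegular N x) : IsSMulRegular (L →ₗ[R] N) x :=
  fun _ _ h => LinearMap.ext fun l => hx (LinearMap.congr_fun h l)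

lemma mem_smul_top_linearMap (hx : IsSMulRegular N x) {f : L →ₗ[R] N}
    (hf : ∀ l, f l ∈ x • (⊤ : Submodule R N)) : f ∈ x • (⊤ : Submodule R (L →ₗ[R] N)) := by
  simp only [Submodule.mem_smul_pointwise_iff_exists, Submodule.mem_top, true_and] at hf ⊢
  choose g hg using hf
  let g' : L →ₗ[R] N :=
    { toFun := g
      map_add' := fun a b => hx (by simp only [smul_add, hg, map_add])
      map_smul' := fun r a => hx (by simp only [smul_comm x, hg, map_smul, RingHom.id_apply]) }
  exact ⟨g', LinearMap.ext hg⟩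

lemma isWeaklyRegular_linearMap_pair (h : IsWeaklyRegular N [x, y]) :
    IsWeaklyRegular (L →ₗ[R] N) [x, y] := by
  simp only [isWeaklyRegular_cons_iff, IsWeaklyRegular.nil, and_true] at h ⊢
  obtain ⟨hx, hy⟩ := h
  refine ⟨isSMulRegular_linearMap hx, ?_⟩
  rw [isSMulRegular_quotient_iff_mem_of_smul_mem] at hy ⊢
  intro f hf
  obtain ⟨g, -, hg⟩ := (Submodule.mem_smul_pointwise_iff_exists _ _ _).mp hf
  exact mem_smul_top_linearMap hx fun l => hy _ <|
    (Submodule.mem_smul_pointwise_iff_exists _ _ _).mpr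
      ⟨g l, Submodule.mem_top, LinearMap.congr_fun hg l⟩

end LinearMap

lemma exists_comp_eq_smul_id_of_projective_localizedModule {R : Type*} [CommRing R]
    (S : Submonoid R) {M P : Type*} [AddCommGroup M] [Module R M] [Module.FinitePresentation R M]
    [AddCommGroup P] [Module R P] [Module.Projective (Localization S) (LocalizedModule S M)]
    {π : P →ₗ[R] M} (hπ : Function.Surjective π) :
    ∃ s ∈ S, ∃ g : M →ₗ[R] P, π ∘ₗ g = s • LinearMap.id := by
  let ιM := LocalizedModule.mkLinearMap S M
  let ιP := LocalizedModule.mkLinearMap S P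
  obtain ⟨σ, hσ⟩ := Module.projective_lifting_property (LocalizedModule.map S π) LinearMap.id
    (LocalizedModule.map_surjective S π hπ)
  obtain ⟨g, s, hg⟩ := Module.FinitePresentation.exists_lift_of_isLocalizedModule S ιP
    (σ.restrictScalars R ∘ₗ ιM)
  have hπg : ιM ∘ₗ (π ∘ₗ g) = ιM ∘ₗ (s • LinearMap.id) := by
    ext m
    calc ιM (π (g m)) = LocalizedModule.map S π (ιP (g m)) := by
          simp [ιM, ιP, LocalizedModule.mkLinearMap_apply, LocalizedModule.map_mk]
      _ = LocalizedModule.map S π ((s : R) • σ (ιM m)) := congrArg _ (LinearMap.congr_fun hg m)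
      _ = (s : R) • LocalizedModule.map S π (σ (ιM m)) :=
          ((LocalizedModule.map S π).restrictScalars R).map_smul _ _
      _ = (s : R) • ιM m := congrArg _ (LinearMap.congr_fun hσ (ιM m))
      _ = ιM ((s • LinearMap.id : M →ₗ[R] M) m) := (ιM.map_smul _ _).symm
  obtain ⟨t, ht⟩ := Module.Finite.exists_smul_of_comp_eq_of_isLocalizedModule S ιM _ _ hπg
  exact ⟨t * s, (t * s).2, t • g, by rw [LinearMap.comp_smul, ht, smul_smul]; rfl⟩

section Ext

open RingTheory.Sequence

lemma subsingleton_derivedExt_succ {A : Type*} [Ring A] {C : Type*} [Category* C] [Abelian C]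
    [Linear A C] [EnoughProjectives C] [HasExt C] (X Y : C) (n : ℕ)
    [Subsingleton (Abelian.Ext X Y (n + 1))] :
    Subsingleton (((Ext A C (n + 1)).obj (Opposite.op X)).obj Y) := by
  let P := ProjectiveResolution.of X
  suffices h : (P.complex.linearYonedaObj A Y).ExactAt (n + 1) from
    ModuleCat.subsingleton_of_isZero
      ((HomologicalComplex.exactAt_iff_isZero_homology _ _).mp h |>.of_iso (P.isoExt (n + 1) Y))
  rw [HomologicalComplex.exactAt_iff' _ n (n + 1) (n + 2) (by simp) (by simp),
    ShortComplex.moduleCat_exact_iff]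
  exact fun f hf => (P.extMk_eq_zero_iff f (n + 2) rfl hf n rfl).mp (Subsingleton.elim _ _)

lemma subsingleton_ext_X₃_of_shortExact {C : Type*} [Category* C] [Abelian C] [HasExt C]
    {S : ShortComplex C} (hS : S.ShortExact) (T : C) (n : ℕ) [Subsingleton (Abelian.Ext T S.X₂ n)]
    [Subsingleton (Abelian.Ext T S.X₁ (n + 1))] : Subsingleton (Abelian.Ext T S.X₃ n) := by
  refine subsingleton_of_forall_eq 0 fun α => ?_
  obtain ⟨β, rfl⟩ := Abelian.Ext.covariant_sequence_exact₃ T hS α rfl (Subsingleton.elim _ _)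
  rw [Subsingleton.elim β 0, Abelian.Ext.zero_comp]

lemma smul_ext_eq_zero_of_comp_eq_smul_id {R : Type*} [CommRing R] {C : Type*} [Category* C]
    [Abelian C] [Linear R C] [HasExt C] {X Y P : C} [Projective P] {n : ℕ} {s : R}
    {g : X ⟶ P} {π : P ⟶ X} (h : g ≫ π = s • 𝟙 X) (e : Abelian.Ext X Y (n + 1)) : s • e = 0 := by
  calc s • e = (Abelian.Ext.mk₀ (s • 𝟙 X)).comp e (zero_add _) := by simp [Abelian.Ext.mk₀_smul]
    _ = (Abelian.Ext.mk₀ g).comp ((Abelian.Ext.mk₀ π).comp e (zero_add _)) (zero_add _) := by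
      rw [← h, ← Abelian.Ext.mk₀_comp_mk₀_assoc]
    _ = 0 := by
      rw [Abelian.Ext.eq_zero_of_projective ((Abelian.Ext.mk₀ π).comp e _), Abelian.Ext.comp_zero]

variable {R : Type u} [CommRing R] [Small.{v} R]

lemma smul_ext_eq_zero_of_mem_annihilator {T Y : ModuleCat.{v} R} {r : R}
    (hr : r ∈ Module.annihilator R T) {n : ℕ} (e : Abelian.Ext T Y n) : r • e = 0 := by
  simpa [Abelian.Ext.mk₀_smul] using ConcreteCategory.congr_hom
    (Abelian.Ext.postcomp_smul_id_eq_zero_of_mem_annihilator (M := Y) hr n) e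

lemma subsingleton_ext_of_isWeaklyRegular {T : ModuleCat.{v} R} {rs : List R}
    (hT : ∀ r ∈ rs, r ∈ Module.annihilator R T) {N : Type v} [AddCommGroup N] [Module R N]
    (hN : IsWeaklyRegular N rs) {i : ℕ} (hi : i < rs.length) :
    Subsingleton (Abelian.Ext T (ModuleCat.of R N) i) := by
  induction rs generalizing N i with
  | nil => simp at hi
  | cons r rs ih =>
    obtain ⟨hr, hrs⟩ := (isWeaklyRegular_cons_iff N r rs).mp hN
    obtain ⟨hrT, hrsT⟩ := List.forall_mem_cons.mp hT
    obtain ⟨π, w, hS⟩ : ∃ (π : ModuleCat.of R N ⟶ ModuleCat.of R (QuotSMulTop r N))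
        (w : (r • 𝟙 (ModuleCat.of R N)) ≫ π = 0), (ShortComplex.mk _ π w).ShortExact :=
      ⟨_, _, IsSMulRegular.smulShortComplex_shortExact (M := ModuleCat.of R N) hr⟩
    have hcomp (α : Abelian.Ext T (ModuleCat.of R N) i) :
        α.comp (Abelian.Ext.mk₀ (r • 𝟙 (ModuleCat.of R N))) (add_zero i) = 0 := by
      rw [← Abelian.Ext.smul_eq_comp_mk₀, smul_ext_eq_zero_of_mem_annihilator hrT]
    refine subsingleton_of_forall_eq 0 fun α => ?_
    cases i with
    | zero =>
      have : Mono (r • 𝟙 (ModuleCat.of R N)) := hS.mono_f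
      exact Abelian.Ext.postcomp_mk₀_injective_of_mono T (r • 𝟙 (ModuleCat.of R N))
        ((hcomp α).trans (map_zero _).symm)
    | succ i =>
      have := ih hrsT hrs (Nat.lt_of_succ_lt_succ hi)
      obtain ⟨β, rfl⟩ := Abelian.Ext.covariant_sequence_exact₁ T hS α (hcomp α) rfl
      rw [Subsingleton.elim β 0, Abelian.Ext.zero_comp]

lemma subsingleton_ext_of_exact {A B C D : Type v} [AddCommGroup A] [Module R A]
    [AddCommGroup B] [Module R B] [AddCommGroup C] [Module R C] [AddCommGroup D] [Module R D]
    {f : A →ₗ[R] B} {g : B →ₗ[R] C} {h : C →ₗ[R] D} (hf : Function.Injective f)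
    (hfg : Function.Exact f g) (hgh : Function.Exact g h) (hh : Function.Surjective h)
    (T : ModuleCat.{v} R) (n : ℕ) [Subsingleton (Abelian.Ext T (ModuleCat.of R A) (n + 2))]
    [Subsingleton (Abelian.Ext T (ModuleCat.of R B) (n + 1))]
    [Subsingleton (Abelian.Ext T (ModuleCat.of R C) n)] :
    Subsingleton (Abelian.Ext T (ModuleCat.of R D) n) := by
  let g' : B →ₗ[R] LinearMap.ker h := g.codRestrict _ hgh.apply_apply_eq_zero
  have hfg' : Function.Exact f g' := fun b => by
    rw [← hfg b, ← Submodule.coe_eq_zero]; rfl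
  have hg' : Function.Surjective g' := fun ⟨c, hc⟩ => by
    obtain ⟨b, rfl⟩ := (hgh c).mp hc
    exact ⟨b, rfl⟩
  have hS := ModuleCat.shortComplex_shortExact
    (ModuleCat.shortComplexOfCompEqZero f g' hfg'.linearMap_comp_eq_zero) hfg' hf hg'
  have : Subsingleton (Abelian.Ext T (ModuleCat.of R (LinearMap.ker h)) (n + 1)) :=
    subsingleton_ext_X₃_of_shortExact hS T (n + 1)
  exact subsingleton_ext_X₃_of_shortExact (LinearMap.shortExact_shortComplexKer hh) T n

variable {X Y : ModuleCat.{v} R} {I : Ideal R}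

lemma le_radical_annihilator_ext [Module.FinitePresentation R X]
    (hX : ∀ (p : Ideal R) [p.IsPrime], ¬ I ≤ p →
      Module.Projective (Localization.AtPrime p) (LocalizedModule p.primeCompl X)) (n : ℕ) :
    I ≤ (Module.annihilator R (Abelian.Ext X Y (n + 1))).radical := by
  refine le_radical_annihilator_of_forall_exists_smul_eq_zero fun p _ hIp => ?_
  have := hX p hIp
  have hπ := (ModuleCat.epi_iff_surjective _).mp X.shortExact_projectiveShortComplex.epi_g
  obtain ⟨s, hs, g, hg⟩ :=
    exists_comp_eq_smul_id_of_projective_localizedModule p.primeCompl hπ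
  have : Projective X.projectiveShortComplex.X₂ :=
    (IsProjective.iff_projective _).mp inferInstance
  exact ⟨s, hs, smul_ext_eq_zero_of_comp_eq_smul_id (P := X.projectiveShortComplex.X₂)
    (g := ModuleCat.ofHom g) (ModuleCat.hom_ext hg)⟩

lemma isWeaklyRegular_ext_zero_iff {rs : List R} :
    IsWeaklyRegular (Abelian.Ext X Y 0) rs ↔ IsWeaklyRegular (X →ₗ[R] Y) rs :=
  ((Abelian.Ext.linearEquiv₀ (R := R)).trans
    (ModuleCat.homLinearEquiv (S := R))).isWeaklyRegular_congr rs

lemma subsingleton_ext_ext_one_of_isWeaklyRegular {S : ShortComplex (ModuleCat.{v} R)}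
    (hS : S.ShortExact) [Projective S.X₂] {T : ModuleCat.{v} R} {x y : R} {rs : List R}
    (hY : IsWeaklyRegular Y [x, y]) (hxy : ∀ r ∈ [x, y], r ∈ Module.annihilator R T)
    (hHom : IsWeaklyRegular (S.X₃ →ₗ[R] Y) rs) (hrs : ∀ r ∈ rs, r ∈ Module.annihilator R T)
    (hlength : 2 < rs.length) :
    Subsingleton (Abelian.Ext T (ModuleCat.of R (Abelian.Ext S.X₃ Y 1)) 0) := by
  have := hS.epi_g
  have hvanish (Z : ModuleCat.{v} R) {i : ℕ} (hi : i < 2) :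
      Subsingleton (Abelian.Ext T (ModuleCat.of R (Abelian.Ext Z Y 0)) i) :=
    subsingleton_ext_of_isWeaklyRegular hxy
      (isWeaklyRegular_ext_zero_iff.mpr (isWeaklyRegular_linearMap_pair hY)) hi
  have := subsingleton_ext_of_isWeaklyRegular hrs (isWeaklyRegular_ext_zero_iff.mpr hHom) hlength
  have := hvanish S.X₂ one_lt_two
  have := hvanish S.X₁ two_pos
  exact subsingleton_ext_of_exact
    (f := (Abelian.Ext.mk₀ S.g).precompOfLinear R Y (zero_add 0))
    (g := (Abelian.Ext.mk₀ S.f).precompOfLinear R Y (zero_add 0))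
    (h := hS.extClass.precompOfLinear R Y (add_zero 1))
    (Abelian.Ext.precomp_mk₀_injective_of_epi Y S.g)
    ((ShortComplex.ab_exact_iff_function_exact _).mp
      (Abelian.Ext.contravariant_sequence_exact₂' hS Y 0))
    ((ShortComplex.ab_exact_iff_function_exact _).mp
      (Abelian.Ext.contravariant_sequence_exact₁' hS Y 0 1 (add_zero 1)))
    (precomp_extClass_surjective_of_projective_X₂ Y hS 0) T 0

lemma subsingleton_ext_one_of_isWeaklyRegular [IsNoetherianRing R] [Module.Finite R X]
    (hX : ∀ (p : Ideal R) [p.IsPrime], ¬ I ≤ p →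
      Module.Projective (Localization.AtPrime p) (LocalizedModule p.primeCompl X))
    {x y : R} {rs : List R} (hY : IsWeaklyRegular Y [x, y]) (hxy : ∀ r ∈ [x, y], r ∈ I)
    (hHom : IsWeaklyRegular (X →ₗ[R] Y) rs) (hrs : ∀ r ∈ rs, r ∈ I) (hlength : 2 < rs.length) :
    Subsingleton (Abelian.Ext X Y 1) := by
  have : Module.FinitePresentation R X := Module.finitePresentation_of_finite R X
  refine subsingleton_of_torsionBySet_eq_bot (le_radical_annihilator_ext hX 0) ?_
  let T := Submodule.torsionBySet R (Abelian.Ext X Y 1) I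
  have hT : I ≤ Module.annihilator R T :=
    (Submodule.torsion_gc R (Abelian.Ext X Y 1)).l_u_le (OrderDual.toDual I)
  have : Projective X.projectiveShortComplex.X₂ :=
    (IsProjective.iff_projective _).mp inferInstance
  have := subsingleton_ext_ext_one_of_isWeaklyRegular X.shortExact_projectiveShortComplex
    (T := ModuleCat.of R T) hY (fun r hr => hT (hxy r hr)) hHom (fun r hr => hT (hrs r hr)) hlength
  have : Subsingleton (T →ₗ[R] Abelian.Ext X Y 1) :=
    (Abelian.Ext.addEquiv₀.trans (ModuleCat.homAddEquiv (M := ModuleCat.of R T)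
      (N := ModuleCat.of R (Abelian.Ext X Y 1)))).symm.subsingleton
  change T = ⊥
  rw [← T.range_subtype, Subsingleton.elim T.subtype 0, LinearMap.range_zero]

end Ext

theorem stmt18_general (R : Type u) [CommRing R] [IsNoetherianRing R] [Small.{v} R] (I : Ideal R)
    (M N : Type v) [AddCommGroup M] [Module R M] [Module.Finite R M] [AddCommGroup N] [Module R N]
    (hloc : ∀ (p : Ideal R) [p.IsPrime], ¬ I ≤ p →
      Module.Projective (Localization.AtPrime p) (LocalizedModule p.primeCompl M))
    (hdepthN : ∃ x y : R, x ∈ I ∧ y ∈ I ∧ RingTheory.Sequence.IsWeaklyRegular N [x, y])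
    (hdepthHom : ∃ x y z : R, x ∈ I ∧ y ∈ I ∧ z ∈ I ∧
      RingTheory.Sequence.IsWeaklyRegular (M →ₗ[R] N) [x, y, z]) :
    Subsingleton (((Ext R (ModuleCat R) 1).obj
      (Opposite.op (ModuleCat.of R M))).obj (ModuleCat.of R N)) := by
  obtain ⟨x, y, hx, hy, hxy⟩ := hdepthN
  obtain ⟨x', y', z', hx', hy', hz', hxyz'⟩ := hdepthHom
  have := subsingleton_ext_one_of_isWeaklyRegular (X := ModuleCat.of R M) (Y := ModuleCat.of R N)
    hloc hxy (by simp [hx, hy]) hxyz' (by simp [hx', hy', hz']) (Nat.lt_succ_self 2)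
  exact subsingleton_derivedExt_succ _ _ 0

/-- Let `(R,𝔪)` be a noetherian local ring and `M` a finitely generated
`R`-module which is locally free on the punctured spectrum (for every prime `𝔭 ≠ 𝔪` the
localization `M_𝔭` is free over `R_𝔭`). Assume there is an `M`-regular sequence of length
two of elements of `𝔪`, and a `Hom_R(M,M)`-regular sequence of length three of elements
of `𝔪`. Then `Ext¹_R(M,M) = 0`. -/
theorem stmt18 (R : Type u) [CommRing R] [IsNoetherianRing R] [IsLocalRing R]
    (M : Type u) [AddCommGroup M] [Module R M] [Module.Finite R M]
    (hloc : ∀ (p : Ideal R) [p.IsPrime], p ≠ IsLocalRing.maximalIdeal R →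
      Module.Free (Localization.AtPrime p) (LocalizedModule p.primeCompl M))
    (hdepthM : ∃ x y : R, x ∈ IsLocalRing.maximalIdeal R ∧ y ∈ IsLocalRing.maximalIdeal R ∧
      RingTheory.Sequence.IsRegular M [x, y])
    (hdepthHom : ∃ x y z : R, x ∈ IsLocalRing.maximalIdeal R ∧
      y ∈ IsLocalRing.maximalIdeal R ∧ z ∈ IsLocalRing.maximalIdeal R ∧
      RingTheory.Sequence.IsRegular (M →ₗ[R] M) [x, y, z]) :
    Subsingleton (((Ext R (ModuleCat R) 1).obj
      (Opposite.op (ModuleCat.of R M))).obj (ModuleCat.of R M)) := by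
  refine stmt18_general R (IsLocalRing.maximalIdeal R) M M (fun p _ hp => ?_) ?_ ?_
  · have := hloc p fun h => hp h.ge
    infer_instance
  · obtain ⟨x, y, hx, hy, hxy⟩ := hdepthM
    exact ⟨x, y, hx, hy, hxy.toIsWeaklyRegular⟩
  · obtain ⟨x, y, z, hx, hy, hz, hxyz⟩ := hdepthHom
    exact ⟨x, y, z, hx, hy, hz, hxyz.toIsWeaklyRegular⟩
end
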